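/- Let m, n ≥ 1, set N = m + n, and let S_0 be any map from the set of planar thin rectangles in F' to {1, −1} satisfying (Sq) and (Hex). Then there is exactly one map S from the set of planar empty rectangles in F' to {1, −1} that extends S_0 and satisfies property (S-3) with respect to squares all four of whose rectangles are planar, empty, and in F'. -/

import Mathlib

/-- A rectangle `r(σ, i, j)` on the toroidal grid of size `N`: a flow from the
generator `σ` to the generator `σ^{ij}`. -/
structure GridRect (N : ℕ) where
  perm : Equiv.Perm (Fin N)
  i : Fin N
  j : Fin N
  hij : i ≠ j

namespace GridRect

variable {N : ℕ}

/-- The ending generator `σ^{ij}` of the rectangle `r(σ, i, j)`. -/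
def endPerm (r : GridRect N) : Equiv.Perm (Fin N) :=
  (Equiv.swap r.i r.j).trans r.perm

/-- The domain of the rectangle `r(σ,i,j)`: the indicator function of `C × R` where `C`
is the cyclic interval of columns from `i` to `j` and `R` is the cyclic interval of rows
from `σ(i)` to `σ(j)`. -/
def dom (r : GridRect N) (p : Fin N × Fin N) : ℕ :=
  if (p.1 - r.i < r.j - r.i) ∧ (p.2 - r.perm r.i < r.perm r.j - r.perm r.i) then 1 else 0

/-- A rectangle is planar if `i < j` and `σ(i) < σ(j)`. -/
def Planar (r : GridRect N) : Prop := r.i < r.j ∧ r.perm r.i < r.perm r.j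

/-- A planar rectangle is empty if no column strictly between `i` and `j` is sent strictly
between `σ(i)` and `σ(j)`. -/
def IsEmptyRect (r : GridRect N) : Prop :=
  ¬ ∃ c : Fin N, r.i < c ∧ c < r.j ∧ r.perm r.i < r.perm c ∧ r.perm c < r.perm r.j

/-- A planar rectangle is thin if `j = i + 1`. -/
def Thin (r : GridRect N) : Prop := (r.j : ℕ) = (r.i : ℕ) + 1

end GridRect

/-- The pairs `(r1, r2)` and `(r3, r4)` form a square: they are distinct ordered pairs,
`r1 : x → y`, `r2 : y → z`, `r3 : x → y'`, `r4 : y' → z` with `z ≠ x`, and the domains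
satisfy `D(r1) + D(r2) = D(r3) + D(r4)` pointwise. -/
def IsSquareOf {N : ℕ} (r1 r2 r3 r4 : GridRect N) : Prop :=
  (r1, r2) ≠ (r3, r4) ∧
  r3.perm = r1.perm ∧
  r2.perm = r1.endPerm ∧
  r4.perm = r3.endPerm ∧
  r4.endPerm = r2.endPerm ∧
  r2.endPerm ≠ r1.perm ∧
  ∀ p : Fin N × Fin N, r1.dom p + r2.dom p = r3.dom p + r4.dom p

/-- The set `Σ` of generators `σ` (0-indexed: columns/rows `0,…,m+n−1`) with
`σ(j) ∈ {0,…,m}` for `j < m` and `σ(j) ∈ {m−1,…,m+n−1}` for `j ≥ m`. -/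
def GenSet (m n : ℕ) : Set (Equiv.Perm (Fin (m + n))) :=
  {σ | ∀ j : Fin (m + n), ((j : ℕ) < m → (σ j : ℕ) ≤ m) ∧ (m ≤ (j : ℕ) → m ≤ (σ j : ℕ) + 1)}

/-- The set `F'` of rectangles with both endpoint generators in `Σ`. -/
def FSet (m n : ℕ) : Set (GridRect (m + n)) :=
  {r | r.perm ∈ GenSet m n ∧ r.endPerm ∈ GenSet m n}

/-- The set of planar thin rectangles in `F'`. -/
def PTSet (m n : ℕ) : Set (GridRect (m + n)) :=
  {r | r ∈ FSet m n ∧ r.Planar ∧ r.Thin}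

/-- The set of planar empty rectangles in `F'`. -/
def PESet (m n : ℕ) : Set (GridRect (m + n)) :=
  {r | r ∈ FSet m n ∧ r.Planar ∧ r.IsEmptyRect}

/-- The column `c` as an element of `Fin N`, given `c + 1 < N`. -/
def colFin {N : ℕ} (c : ℕ) (hc : c + 1 < N) : Fin N := ⟨c, Nat.lt_of_succ_lt hc⟩

/-- The column `c + 1` as an element of `Fin N`, given `c + 1 < N`. -/
def colFin' {N : ℕ} (c : ℕ) (hc : c + 1 < N) : Fin N := ⟨c + 1, hc⟩

theorem colNe {N : ℕ} (c : ℕ) (hc : c + 1 < N) : colFin c hc ≠ colFin' c hc := by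
  simp only [colFin, colFin', ne_eq, Fin.mk.injEq]
  omega

/-- The generator `σ·τ_c = σ^{c,c+1}`. -/
def tmul {N : ℕ} (σ : Equiv.Perm (Fin N)) (c : ℕ) (hc : c + 1 < N) : Equiv.Perm (Fin N) :=
  (Equiv.swap (colFin c hc) (colFin' c hc)).trans σ

/-- The unique planar thin rectangle `e(σ, c)` connecting `σ` and `σ·τ_c`: it is
`r(σ, c, c+1)` if `σ(c) < σ(c+1)`, and `r(σ·τ_c, c, c+1)` otherwise. -/
def edgeRect {N : ℕ} (σ : Equiv.Perm (Fin N)) (c : ℕ) (hc : c + 1 < N) : GridRect N :=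
  if σ (colFin c hc) < σ (colFin' c hc) then ⟨σ, colFin c hc, colFin' c hc, colNe c hc⟩
  else ⟨tmul σ c hc, colFin c hc, colFin' c hc, colNe c hc⟩

/-- Property (Sq) for a sign function on the planar thin rectangles in `F'`. -/
def SqCond (m n : ℕ) (S : GridRect (m + n) → ℤ) : Prop :=
  ∀ (σ : Equiv.Perm (Fin (m + n))) (c d : ℕ) (hc : c + 1 < m + n) (hd : d + 1 < m + n),
    (c + 2 ≤ d ∨ d + 2 ≤ c) →
    σ ∈ GenSet m n → tmul σ c hc ∈ GenSet m n → tmul σ d hd ∈ GenSet m n →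
    tmul (tmul σ c hc) d hd ∈ GenSet m n →
    S (edgeRect σ c hc) * S (edgeRect (tmul σ c hc) d hd) *
      S (edgeRect σ d hd) * S (edgeRect (tmul σ d hd) c hc) = -1

/-- Property (Hex) for a sign function on the planar thin rectangles in `F'`. -/
def HexCond (m n : ℕ) (S : GridRect (m + n) → ℤ) : Prop :=
  ∀ (σ : Equiv.Perm (Fin (m + n))) (c : ℕ) (hc1 : c + 1 < m + n) (hc2 : c + 1 + 1 < m + n),
    σ ∈ GenSet m n → tmul σ c hc1 ∈ GenSet m n →
    tmul (tmul σ c hc1) (c + 1) hc2 ∈ GenSet m n →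
    tmul (tmul (tmul σ c hc1) (c + 1) hc2) c hc1 ∈ GenSet m n →
    tmul (tmul σ (c + 1) hc2) c hc1 ∈ GenSet m n →
    tmul σ (c + 1) hc2 ∈ GenSet m n →
    S (edgeRect σ c hc1) * S (edgeRect (tmul σ c hc1) (c + 1) hc2) *
      S (edgeRect (tmul (tmul σ c hc1) (c + 1) hc2) c hc1) *
      S (edgeRect (tmul (tmul (tmul σ c hc1) (c + 1) hc2) c hc1) (c + 1) hc2) *
      S (edgeRect (tmul (tmul σ (c + 1) hc2) c hc1) c hc1) *
      S (edgeRect (tmul σ (c + 1) hc2) (c + 1) hc2) = 1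

/-- Property (S-3) restricted to squares all four of whose rectangles lie in `R`. -/
def SqPropOn {N : ℕ} (R : Set (GridRect N)) (S : GridRect N → ℤ) : Prop :=
  ∀ r1 r2 r3 r4 : GridRect N, IsSquareOf r1 r2 r3 r4 →
    r1 ∈ R → r2 ∈ R → r3 ∈ R → r4 ∈ R → S r1 * S r2 * S r3 * S r4 = -1

/- The sign assignments are those of a spin cover. In the Clifford algebra of an orthonormal basis
`e`, the transposition `(i j)` lifts to the root `e i - e j`, and a lift `s` of the generators gives
every rectangle `r(x, i, j)`, ending in `y`, a sign `S r` by `s x * (e i - e j) = S r • s y`. The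
two products of roots around a square of planar empty rectangles are opposite, which is (S-3).

The lift belonging to `S₀` is constructed by recursion along the descents of a generator. It does
not depend on the choice of descents: roots of distant transpositions anticommute, which matches
(Sq), and roots of neighbouring ones satisfy the braid relation, which matches (Hex).

Uniqueness holds because a planar empty rectangle that is not thin lies in a square with two thin
rectangles and one of smaller width, so that (S-3) determines `S` by induction on the width. -/

open Equiv

section Clifford

/-- A family of anticommuting square roots of `1`: the generators of the Clifford algebra of an
orthonormal basis. -/
structure IsCliffordFamily {ι A : Type*} [Ring A] (e : ι → A) : Prop where
  mul_self : ∀ i, e i * e i = 1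
  anticomm : ∀ {i j}, i ≠ j → e i * e j = -(e j * e i)

theorem isCliffordFamily_ι_single (R ι : Type*) [CommRing R] [Fintype ι] [DecidableEq ι] :
    IsCliffordFamily fun i ↦ CliffordAlgebra.ι
      (QuadraticMap.weightedSumSquares R fun _ : ι ↦ (1 : R)) (Pi.single i 1) where
  mul_self i := by
    rw [CliffordAlgebra.ι_sq_scalar]
    simp [QuadraticMap.weightedSumSquares_apply, Pi.single_apply]
  anticomm {i j} hij := by
    refine CliffordAlgebra.ι_mul_ι_comm_of_isOrtho ?_
    simp only [QuadraticMap.isOrtho_def, QuadraticMap.weightedSumSquares_apply,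
      ← Finset.sum_add_distrib]
    refine Finset.sum_congr rfl fun k _ ↦ ?_
    by_cases hk : k = i
    · simp [hk, hij]
    · simp [hk]

namespace IsCliffordFamily

variable {ι A : Type*} [Ring A] {e : ι → A}

theorem sub_mul_self (he : IsCliffordFamily e) {a b : ι} (hab : a ≠ b) :
    (e a - e b) * (e a - e b) = 2 := by
  rw [sub_mul, mul_sub, mul_sub, he.mul_self, he.mul_self, he.anticomm hab, ← one_add_one_eq_two]
  abel

theorem isUnit_sub (he : IsCliffordFamily e) (h2 : IsUnit (2 : A)) {a b : ι} (hab : a ≠ b) :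
    IsUnit (e a - e b) :=
  (isUnit_pow_iff two_ne_zero).1 (by rwa [sq, he.sub_mul_self hab])

/- Conjugation by `e a - e b` is minus the reflection in the hyperplane orthogonal to it, and that
reflection permutes the `e k` by the transposition `(a b)`. -/
theorem sub_mul_eq_neg_swap [DecidableEq ι] (he : IsCliffordFamily e) {a b : ι} (hab : a ≠ b)
    (k : ι) :
    (e a - e b) * e k = -(e (swap a b k) * (e a - e b)) := by
  rcases eq_or_ne k a with rfl | hka
  · rw [swap_apply_left, sub_mul, mul_sub, he.mul_self, he.mul_self, neg_sub]
  rcases eq_or_ne k b with rfl | hkb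
  · rw [swap_apply_right, sub_mul, mul_sub, he.mul_self, he.mul_self, neg_sub]
  · rw [swap_apply_of_ne_of_ne hka hkb, sub_mul, mul_sub, he.anticomm hka.symm,
      he.anticomm hkb.symm]
    abel

theorem sub_mul_sub [DecidableEq ι] (he : IsCliffordFamily e) {a b : ι} (hab : a ≠ b) (k l : ι) :
    (e a - e b) * (e k - e l) = -((e (swap a b k) - e (swap a b l)) * (e a - e b)) := by
  rw [mul_sub, he.sub_mul_eq_neg_swap hab, he.sub_mul_eq_neg_swap hab, sub_mul]
  abel

theorem sub_braid (he : IsCliffordFamily e) {a b c : ι} (hab : a ≠ b) (hbc : b ≠ c)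
    (hac : a ≠ c) :
    (e a - e b) * (e b - e c) * (e a - e b) = (e b - e c) * (e a - e b) * (e b - e c) := by
  classical
  rw [he.sub_mul_sub hab b c, he.sub_mul_sub hbc a b, swap_apply_right,
    swap_apply_of_ne_of_ne hac.symm hbc.symm, swap_apply_left, swap_apply_of_ne_of_ne hab hac,
    neg_mul, neg_mul, mul_assoc, mul_assoc, he.sub_mul_self hab, he.sub_mul_self hbc]

end IsCliffordFamily

end Clifford

theorem swap_inj_of_lt {α : Type*} [LinearOrder α] {a b c d : α} (hab : a < b) (hcd : c < d)
    (h : swap a b = swap c d) : a = c ∧ b = d := by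
  have ha := congr($h a)
  have hb := congr($h b)
  simp only [swap_apply_def] at ha hb
  grind

/- A double transposition factors only as `s * t = t * s`, and a 3-cycle `s * t` only as
`s * t = t * (t * s * t) = (s * t * s) * s`. -/
theorem eq_or_eq_or_eq_of_swap_mul_swap_eq {α : Type*} [LinearOrder α] {i j k l i' j' k' l' : α}
    (hij : i < j) (hkl : k < l) (hij' : i' < j') (hkl' : k' < l')
    (h : swap i j * swap k l = swap i' j' * swap k' l') (hne : swap i j * swap k l ≠ 1) :
    (i' = k ∧ j' = l) ∨ (k' = i ∧ l' = j) ∨ (i' = i ∧ j' = j) := by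
  have hne' : ¬(i = k ∧ j = l) := by
    rintro ⟨rfl, rfl⟩
    exact hne (swap_mul_self i j)
  have hi := congr($h i)
  have hj := congr($h j)
  have hk := congr($h k)
  have hl := congr($h l)
  have hk' := congr($h k')
  have hl' := congr($h l')
  clear h hne
  simp only [Perm.mul_apply, swap_apply_def] at hi hj hk hl hk' hl'
  grind (splits := 60)

namespace GridRect

variable {N : ℕ}

theorem endPerm_eq_mul (r : GridRect N) : r.endPerm = r.perm * swap r.i r.j := rfl

theorem Planar.toLex_perm_lt {r : GridRect N} (hr : r.Planar) :
    toLex ⇑r.perm < toLex ⇑r.endPerm := by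
  have hlt : r.endPerm r.j < r.endPerm r.i := by simpa [endPerm_eq_mul] using hr.2
  have hperm : ⇑r.perm = r.endPerm ∘ swap r.i r.j := by ext p; simp [endPerm_eq_mul]
  rw [hperm]
  exact Pi.lex_desc hr.1.le hlt

/-- The root `e i - e j` of the Clifford algebra attached to a rectangle with columns `i`, `j`; it
lifts the transposition by which the rectangle acts on generators. -/
def root {A : Type*} [Ring A] (e : Fin N → A) (r : GridRect N) : A := e r.i - e r.j

end GridRect

namespace IsSquareOf

open GridRect

variable {N : ℕ} {r₁ r₂ r₃ r₄ : GridRect N}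

theorem symm (h : IsSquareOf r₁ r₂ r₃ r₄) : IsSquareOf r₃ r₄ r₁ r₂ := by
  obtain ⟨hne, h31, h21, h43, h42, hz, hdom⟩ := h
  exact ⟨hne.symm, h31.symm, h43, h21, h42.symm, by rwa [h42, h31], fun p ↦ (hdom p).symm⟩

theorem swap_mul_swap_eq (h : IsSquareOf r₁ r₂ r₃ r₄) :
    swap r₁.i r₁.j * swap r₂.i r₂.j = swap r₃.i r₃.j * swap r₄.i r₄.j := by
  obtain ⟨-, h31, h21, h43, h42, -, -⟩ := h
  rw [endPerm_eq_mul, endPerm_eq_mul, h43, h21, endPerm_eq_mul, endPerm_eq_mul, h31, mul_assoc,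
    mul_assoc] at h42
  exact (mul_left_cancel h42).symm

theorem swap_mul_swap_ne_one (h : IsSquareOf r₁ r₂ r₃ r₄) :
    swap r₁.i r₁.j * swap r₂.i r₂.j ≠ 1 := by
  obtain ⟨-, -, h21, -, -, hz, -⟩ := h
  intro h
  rw [endPerm_eq_mul, h21, endPerm_eq_mul, mul_assoc, h, mul_one] at hz
  exact hz rfl

/- Reversing the order would place the lower left or upper right corner of `r₁` inside `r₃`. -/
theorem swap_apply_lt_swap_apply (h : IsSquareOf r₁ r₂ r₃ r₄) (h₁ : r₁.Planar) (h₂ : r₂.Planar)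
    (h₃ : r₃.IsEmptyRect) (hi : r₃.i = r₂.i) (hj : r₃.j = r₂.j) :
    swap r₂.i r₂.j r₁.i < swap r₂.i r₂.j r₁.j := by
  have hone := h.swap_mul_swap_ne_one
  obtain ⟨-, h31, h21, -, -, -, -⟩ := h
  obtain ⟨x, i, j, hij⟩ := r₁
  obtain ⟨y, k, l, hkl⟩ := r₂
  simp only [Planar, IsEmptyRect, endPerm_eq_mul, h31, hi, hj] at *
  subst h21
  simp only [Perm.mul_apply] at h₂
  obtain ⟨hij, hxij⟩ := h₁
  obtain ⟨hkl, hxkl⟩ := h₂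
  rcases eq_or_ne i k with rfl | hik
  · have hjl : j ≠ l := by
      rintro rfl
      exact hone (swap_mul_self i j)
    rw [swap_apply_left, swap_apply_of_ne_of_ne hkl.ne' hjl.symm] at hxkl
    rw [swap_apply_left, swap_apply_of_ne_of_ne hij.ne' hjl]
    exact lt_of_not_ge fun hle ↦ h₃ ⟨j, hij, hle.lt_of_ne hjl, hxij, hxkl⟩
  rcases eq_or_ne j l with rfl | hjl
  · rw [swap_apply_right, swap_apply_of_ne_of_ne hik.symm hkl.ne] at hxkl
    rw [swap_apply_right, swap_apply_of_ne_of_ne hik hij.ne]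
    exact lt_of_not_ge fun hle ↦ h₃ ⟨i, hle.lt_of_ne hik.symm, hij, hxkl, hxij⟩
  simp only [swap_apply_def, hik, hjl, if_false]
  split_ifs <;> order

variable {A : Type*} [Ring A] {e : Fin N → A}

theorem root_mul_root_of_eq (he : IsCliffordFamily e) (h : IsSquareOf r₁ r₂ r₃ r₄)
    (h₁ : r₁.Planar) (h₂ : r₂.Planar) (h₄ : r₄.Planar) (h₃ : r₃.IsEmptyRect)
    (hi : r₃.i = r₂.i) (hj : r₃.j = r₂.j) :
    r₁.root e * r₂.root e = -(r₃.root e * r₄.root e) := by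
  have hlt := h.swap_apply_lt_swap_apply h₁ h₂ h₃ hi hj
  have hswap : swap r₄.i r₄.j =
      swap (swap r₂.i r₂.j r₁.i) (swap r₂.i r₂.j r₁.j) := by
    rw [swap_apply_apply, swap_inv, mul_assoc, h.swap_mul_swap_eq, hi, hj, swap_mul_self_mul]
  obtain ⟨h4i, h4j⟩ := swap_inj_of_lt h₄.1 hlt hswap
  rw [root, root, root, root, hi, hj, h4i, h4j, he.sub_mul_sub r₂.hij, swap_apply_self,
    swap_apply_self, neg_neg]

theorem root_mul_root (he : IsCliffordFamily e) (h : IsSquareOf r₁ r₂ r₃ r₄)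
    (h₁ : r₁.Planar) (h₂ : r₂.Planar) (h₃ : r₃.Planar) (h₄ : r₄.Planar)
    (h₁' : r₁.IsEmptyRect) (h₃' : r₃.IsEmptyRect) :
    r₁.root e * r₂.root e = -(r₃.root e * r₄.root e) := by
  rcases eq_or_eq_or_eq_of_swap_mul_swap_eq h₁.1 h₂.1 h₃.1 h₄.1 h.swap_mul_swap_eq
    h.swap_mul_swap_ne_one with ⟨hi, hj⟩ | ⟨hi, hj⟩ | ⟨hi, hj⟩
  · exact h.root_mul_root_of_eq he h₁ h₂ h₄ h₃' hi hj
  · rw [h.symm.root_mul_root_of_eq he h₃ h₄ h₂ h₁' hi.symm hj.symm, neg_neg]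
  · have h24 : swap r₂.i r₂.j = swap r₄.i r₄.j := by
      simpa [hi, hj] using h.swap_mul_swap_eq
    obtain ⟨hi', hj'⟩ := swap_inj_of_lt h₂.1 h₄.1 h24
    obtain ⟨hne, h31, h21, h43, -, -, -⟩ := h
    have h13 : r₁ = r₃ := by
      cases r₁
      cases r₃
      simp_all only
    have h24 : r₂ = r₄ := by
      cases r₂
      cases r₄
      simp_all only
    exact absurd (Prod.ext h13 h24) hne

end IsSquareOf

theorem sub_lt_sub_iff_mem_Ico {N : ℕ} {i j : Fin N} (hij : i < j) (p : Fin N) :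
    p - i < j - i ↔ p ∈ Set.Ico i j := by
  have hj := j.2
  rw [Fin.lt_def] at hij
  rw [Set.mem_Ico, Fin.lt_def, Fin.le_def, Fin.lt_def, Fin.sub_val_of_le (Fin.le_def.2 hij.le)]
  by_cases h : i ≤ p
  · rw [Fin.sub_val_of_le h]
    have := Fin.le_def.1 h
    omega
  · have := Fin.coe_sub_iff_lt.2 (not_le.1 h)
    rw [Fin.le_def] at h
    omega

theorem indicator_Ico_eq_add {α M : Type*} [LinearOrder α] [AddZeroClass M] {a b c : α}
    (hab : a ≤ b) (hbc : b ≤ c) (f : α → M) (x : α) :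
    (Set.Ico a c).indicator f x = (Set.Ico a b).indicator f x + (Set.Ico b c).indicator f x := by
  rw [← Set.Ico_union_Ico_eq_Ico hab hbc,
    Set.indicator_union_of_disjoint (Set.Ico_disjoint_Ico_same)]

theorem swap_mul_swap_comm_of_ne {α : Type*} [DecidableEq α] {a b c : α} (hac : a ≠ c)
    (hbc : b ≠ c) : swap a b * swap b c = swap a c * swap a b := by
  rw [mul_swap_eq_swap_mul, swap_apply_right, swap_apply_of_ne_of_ne hac.symm hbc.symm]

theorem swap_braid {α : Type*} [DecidableEq α] {a b c : α} (hab : a ≠ b) (hbc : b ≠ c)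
    (hac : a ≠ c) : swap a b * swap b c * swap a b = swap b c * swap a b * swap b c := by
  rw [swap_mul_swap_mul_swap hab hac, swap_mul_swap_comm_of_ne hac hbc, mul_swap_mul_self,
    swap_comm]

section Squares

open GridRect

variable {N : ℕ}

theorem GridRect.Planar.dom_apply {r : GridRect N} (hr : r.Planar) (p : Fin N × Fin N) :
    r.dom p = (Set.Ico r.i r.j).indicator 1 p.1 *
      (Set.Ico (r.perm r.i) (r.perm r.j)).indicator 1 p.2 := by
  simp only [dom, sub_lt_sub_iff_mem_Ico hr.1, sub_lt_sub_iff_mem_Ico hr.2, Set.indicator_apply,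
    Pi.one_apply, ite_and, mul_ite, mul_one, mul_zero]
  split_ifs <;> rfl

theorem isSquareOf_of_planar {r₁ r₂ r₃ r₄ : GridRect N} (h₁ : r₁.Planar) (h₂ : r₂.Planar)
    (hne : r₁ ≠ r₃) (h31 : r₃.perm = r₁.perm) (h21 : r₂.perm = r₁.endPerm)
    (h43 : r₄.perm = r₃.endPerm) (h42 : r₄.endPerm = r₂.endPerm)
    (hdom : ∀ p, r₁.dom p + r₂.dom p = r₃.dom p + r₄.dom p) : IsSquareOf r₁ r₂ r₃ r₄ := by
  refine ⟨fun h ↦ hne (congrArg Prod.fst h), h31, h21, h43, h42, fun h ↦ ?_, hdom⟩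
  have hlt := h₁.toLex_perm_lt.trans (h21 ▸ h₂.toLex_perm_lt)
  rw [h] at hlt
  exact lt_irrefl _ hlt

variable {i c j : Fin N}

theorem isSquareOf_left_of_below (σ : Perm (Fin N)) (hic : i < c) (hcj : c < j)
    (hci : σ c < σ i) (hij : σ i < σ j) :
    IsSquareOf ⟨σ * swap i c, i, c, hic.ne⟩ ⟨σ, i, j, (hic.trans hcj).ne⟩
      ⟨σ * swap i c, c, j, hcj.ne⟩ ⟨σ * swap i j * swap i c, i, c, hic.ne⟩ := by
  have hj : i ≠ j ∧ c ≠ j := ⟨(hic.trans hcj).ne, hcj.ne⟩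
  have h₁ : Planar ⟨σ * swap i c, i, c, hic.ne⟩ := ⟨hic, by simpa⟩
  have h₂ : Planar ⟨σ, i, j, hj.1⟩ := ⟨hic.trans hcj, hij⟩
  have h₃ : Planar ⟨σ * swap i c, c, j, hcj.ne⟩ :=
    ⟨hcj, by simpa [swap_apply_of_ne_of_ne hj.1.symm hj.2.symm]⟩
  have h₄ : Planar ⟨σ * swap i j * swap i c, i, c, hic.ne⟩ :=
    ⟨hic, by simpa [swap_apply_of_ne_of_ne hic.ne' hj.2] using hci.trans hij⟩
  refine isSquareOf_of_planar h₁ h₂ (by simp [hic.ne]) rfl ?_ ?_ ?_ fun p ↦ ?_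
  · exact (mul_swap_mul_self i c σ).symm
  · simp only [endPerm_eq_mul, mul_assoc, swap_mul_swap_comm_of_ne hj.1 hj.2]
  · exact mul_swap_mul_self i c _
  · rw [h₁.dom_apply, h₂.dom_apply, h₃.dom_apply, h₄.dom_apply]
    simp only [Perm.mul_apply, swap_apply_left, swap_apply_right,
      swap_apply_of_ne_of_ne hj.1.symm hj.2.symm, swap_apply_of_ne_of_ne hic.ne' hj.2]
    rw [indicator_Ico_eq_add hic.le hcj.le, indicator_Ico_eq_add hci.le hij.le]
    ring

theorem isSquareOf_left_of_above (σ : Perm (Fin N)) (hic : i < c) (hcj : c < j)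
    (hij : σ i < σ j) (hjc : σ j < σ c) :
    IsSquareOf ⟨σ, i, j, (hic.trans hcj).ne⟩ ⟨σ * swap i j, i, c, hic.ne⟩
      ⟨σ, i, c, hic.ne⟩ ⟨σ * swap i c, c, j, hcj.ne⟩ := by
  have hj : i ≠ j ∧ c ≠ j := ⟨(hic.trans hcj).ne, hcj.ne⟩
  have h₁ : Planar ⟨σ, i, j, hj.1⟩ := ⟨hic.trans hcj, hij⟩
  have h₂ : Planar ⟨σ * swap i j, i, c, hic.ne⟩ :=
    ⟨hic, by simpa [swap_apply_of_ne_of_ne hic.ne' hj.2]⟩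
  have h₃ : Planar ⟨σ, i, c, hic.ne⟩ := ⟨hic, hij.trans hjc⟩
  have h₄ : Planar ⟨σ * swap i c, c, j, hcj.ne⟩ :=
    ⟨hcj, by simpa [swap_apply_of_ne_of_ne hj.1.symm hj.2.symm]⟩
  refine isSquareOf_of_planar h₁ h₂ (by simp [hcj.ne']) rfl rfl rfl ?_ fun p ↦ ?_
  · simp only [endPerm_eq_mul, mul_assoc, swap_mul_swap_comm_of_ne hj.1 hj.2]
  · rw [h₁.dom_apply, h₂.dom_apply, h₃.dom_apply, h₄.dom_apply]
    simp only [Perm.mul_apply, swap_apply_left, swap_apply_right,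
      swap_apply_of_ne_of_ne hj.1.symm hj.2.symm, swap_apply_of_ne_of_ne hic.ne' hj.2]
    rw [indicator_Ico_eq_add hic.le hcj.le, indicator_Ico_eq_add hij.le hjc.le]
    ring

theorem isSquareOf_right_of_below (σ : Perm (Fin N)) (hic : i < c) (hcj : c < j)
    (hci : σ c < σ i) (hij : σ i < σ j) :
    IsSquareOf ⟨σ, i, j, (hic.trans hcj).ne⟩ ⟨σ * swap i j, c, j, hcj.ne⟩
      ⟨σ, c, j, hcj.ne⟩ ⟨σ * swap c j, i, c, hic.ne⟩ := by
  have hi : i ≠ c ∧ i ≠ j := ⟨hic.ne, (hic.trans hcj).ne⟩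
  have h₁ : Planar ⟨σ, i, j, hi.2⟩ := ⟨hic.trans hcj, hij⟩
  have h₂ : Planar ⟨σ * swap i j, c, j, hcj.ne⟩ :=
    ⟨hcj, by simpa [swap_apply_of_ne_of_ne hic.ne' hcj.ne]⟩
  have h₃ : Planar ⟨σ, c, j, hcj.ne⟩ := ⟨hcj, hci.trans hij⟩
  have h₄ : Planar ⟨σ * swap c j, i, c, hic.ne⟩ :=
    ⟨hic, by simpa [swap_apply_of_ne_of_ne hi.1 hi.2]⟩
  refine isSquareOf_of_planar h₁ h₂ (by simp [hic.ne]) rfl rfl rfl ?_ fun p ↦ ?_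
  · simp only [endPerm_eq_mul, mul_assoc, swap_comm c j, swap_comm i c, swap_comm i j,
      swap_mul_swap_comm_of_ne hi.2.symm hi.1.symm]
  · rw [h₁.dom_apply, h₂.dom_apply, h₃.dom_apply, h₄.dom_apply]
    simp only [Perm.mul_apply, swap_apply_left, swap_apply_right,
      swap_apply_of_ne_of_ne hi.1 hi.2, swap_apply_of_ne_of_ne hic.ne' hcj.ne]
    rw [indicator_Ico_eq_add hic.le hcj.le, indicator_Ico_eq_add hci.le hij.le]
    ring

theorem isSquareOf_right_of_above (σ : Perm (Fin N)) (hic : i < c) (hcj : c < j)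
    (hij : σ i < σ j) (hjc : σ j < σ c) :
    IsSquareOf ⟨σ * swap c j, c, j, hcj.ne⟩ ⟨σ, i, j, (hic.trans hcj).ne⟩
      ⟨σ * swap c j, i, c, hic.ne⟩ ⟨σ * swap i j * swap c j, c, j, hcj.ne⟩ := by
  have hi : i ≠ c ∧ i ≠ j := ⟨hic.ne, (hic.trans hcj).ne⟩
  have h₁ : Planar ⟨σ * swap c j, c, j, hcj.ne⟩ := ⟨hcj, by simpa⟩
  have h₂ : Planar ⟨σ, i, j, hi.2⟩ := ⟨hic.trans hcj, hij⟩
  have h₃ : Planar ⟨σ * swap c j, i, c, hic.ne⟩ :=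
    ⟨hic, by simpa [swap_apply_of_ne_of_ne hi.1 hi.2]⟩
  have h₄ : Planar ⟨σ * swap i j * swap c j, c, j, hcj.ne⟩ :=
    ⟨hcj, by simpa [swap_apply_of_ne_of_ne hic.ne' hcj.ne] using hij.trans hjc⟩
  refine isSquareOf_of_planar h₁ h₂ (by simp [hic.ne']) rfl ?_ ?_ ?_ fun p ↦ ?_
  · exact (mul_swap_mul_self c j σ).symm
  · simp only [endPerm_eq_mul, mul_assoc, swap_comm c j, swap_comm i c, swap_comm i j,
      swap_mul_swap_comm_of_ne hi.2.symm hi.1.symm]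
  · exact mul_swap_mul_self c j _
  · rw [h₁.dom_apply, h₂.dom_apply, h₃.dom_apply, h₄.dom_apply]
    simp only [Perm.mul_apply, swap_apply_left, swap_apply_right,
      swap_apply_of_ne_of_ne hi.1 hi.2, swap_apply_of_ne_of_ne hic.ne' hcj.ne]
    rw [indicator_Ico_eq_add hic.le hcj.le, indicator_Ico_eq_add hij.le hjc.le]
    ring

end Squares

section Generators

open GridRect

variable {m n : ℕ}

theorem mul_swap_mem_GenSet {σ : Perm (Fin (m + n))} (hσ : σ ∈ GenSet m n) {i j : Fin (m + n)}
    (hij : (i : ℕ) < m ↔ (j : ℕ) < m) : σ * swap i j ∈ GenSet m n := by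
  intro p
  have hi := hσ i
  have hj := hσ j
  rw [Perm.mul_apply, swap_apply_def]
  split_ifs with hpi hpj
  · subst hpi
    omega
  · subst hpj
    omega
  · exact hσ p

theorem mem_PESet_of_mem_PTSet {r : GridRect (m + n)} (hr : r ∈ PTSet m n) : r ∈ PESet m n := by
  obtain ⟨hF, hplanar, hthin⟩ := hr
  refine ⟨hF, hplanar, ?_⟩
  rintro ⟨c, hic, hcj, -⟩
  rw [Fin.lt_def] at hic hcj
  rw [Thin] at hthin
  omega

theorem mem_PESet_shrink_left {σ : Perm (Fin (m + n))} {i c j : Fin (m + n)} {hij : i ≠ j}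
    (hr : ⟨σ, i, j, hij⟩ ∈ PESet m n) (hic : i < c) (hcj : c < j)
    (hblock : (i : ℕ) < m ↔ (c : ℕ) < m) :
    ⟨σ * swap i c, c, j, hcj.ne⟩ ∈ PESet m n := by
  obtain ⟨⟨hσ, hend⟩, ⟨-, hlt⟩, hempty⟩ := hr
  have hj : swap i c j = j := swap_apply_of_ne_of_ne hij.symm hcj.ne'
  refine ⟨⟨mul_swap_mem_GenSet hσ hblock, ?_⟩, ⟨hcj, by simpa [hj] using hlt⟩, ?_⟩
  · have := mul_swap_mem_GenSet hend hblock
    rwa [endPerm_eq_mul, mul_assoc, ← swap_mul_swap_comm_of_ne hij hcj.ne, ← mul_assoc] at this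
  · rintro ⟨k, hck, hkj, hk⟩
    simp only [Perm.mul_apply, swap_apply_right, hj,
      swap_apply_of_ne_of_ne (hic.trans hck).ne' hck.ne'] at hk
    exact hempty ⟨k, hic.trans hck, hkj, hk⟩

theorem mem_PESet_shrink_right {σ : Perm (Fin (m + n))} {i c j : Fin (m + n)} {hij : i ≠ j}
    (hr : ⟨σ, i, j, hij⟩ ∈ PESet m n) (hic : i < c) (hcj : c < j)
    (hblock : (c : ℕ) < m ↔ (j : ℕ) < m) :
    ⟨σ * swap c j, i, c, hic.ne⟩ ∈ PESet m n := by
  obtain ⟨⟨hσ, hend⟩, ⟨-, hlt⟩, hempty⟩ := hr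
  have hi : swap c j i = i := swap_apply_of_ne_of_ne hic.ne hij
  refine ⟨⟨mul_swap_mem_GenSet hσ hblock, ?_⟩, ⟨hic, by simpa [hi] using hlt⟩, ?_⟩
  · have := mul_swap_mem_GenSet hend hblock
    rwa [endPerm_eq_mul, mul_assoc, swap_comm i j, swap_comm c j,
      ← swap_mul_swap_comm_of_ne hij.symm hic.ne', ← mul_assoc, swap_comm j c,
      swap_comm c i] at this
  · rintro ⟨k, hik, hkc, hk⟩
    simp only [Perm.mul_apply, swap_apply_left, hi,
      swap_apply_of_ne_of_ne hkc.ne (hkc.trans hcj).ne] at hk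
    exact hempty ⟨k, hik, hkc.trans hcj, hk⟩

theorem mem_PTSet_of_mem_GenSet {σ : Perm (Fin (m + n))} {i j : Fin (m + n)} {hij : i ≠ j}
    (hσ : σ ∈ GenSet m n) (hblock : (i : ℕ) < m ↔ (j : ℕ) < m) (hthin : (j : ℕ) = i + 1)
    (hlt : σ i < σ j) : ⟨σ, i, j, hij⟩ ∈ PTSet m n :=
  ⟨⟨hσ, mul_swap_mem_GenSet hσ hblock⟩, ⟨Fin.lt_def.2 (by simp [hthin]), hlt⟩, hthin⟩

/- Only one of the pairs `(i, i + 1)`, `(j - 1, j)` can straddle the border between the columns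
`< m` and `≥ m`. -/
theorem exists_adjacent_of_not_thin {i j : Fin (m + n)} (hij : i < j) (h : (j : ℕ) ≠ i + 1) :
    ∃ c, i < c ∧ c < j ∧ ((c : ℕ) = i + 1 ∧ ((i : ℕ) < m ↔ (c : ℕ) < m) ∨
      (j : ℕ) = c + 1 ∧ ((c : ℕ) < m ↔ (j : ℕ) < m)) := by
  have hj := j.2
  simp only [Fin.lt_def] at hij ⊢
  by_cases hi : (i : ℕ) + 1 < m ∨ m ≤ i
  · exact ⟨⟨i + 1, by omega⟩, by dsimp; omega⟩
  · exact ⟨⟨j - 1, by omega⟩, by dsimp; omega⟩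

theorem exists_isSquareOf_left {σ : Perm (Fin (m + n))} {i c j : Fin (m + n)} {hij : i ≠ j}
    (hr : ⟨σ, i, j, hij⟩ ∈ PESet m n) (hic : i < c) (hcj : c < j) (hadj : (c : ℕ) = i + 1)
    (hblock : (i : ℕ) < m ↔ (c : ℕ) < m) :
    ∃ r' ∈ PESet m n, ∃ t ∈ PTSet m n, ∃ u ∈ PTSet m n, (r'.j : ℕ) - r'.i < j - i ∧
      (IsSquareOf ⟨σ, i, j, hij⟩ t u r' ∨ IsSquareOf t ⟨σ, i, j, hij⟩ r' u) := by
  have hshrink := mem_PESet_shrink_left hr hic hcj hblock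
  have hwidth : (j : ℕ) - c < j - i := by
    rw [Fin.lt_def] at hcj
    omega
  obtain ⟨⟨hσ, hend⟩, ⟨-, hlt⟩, hempty⟩ := hr
  have hc : swap i j c = c := swap_apply_of_ne_of_ne hic.ne' hcj.ne
  refine ⟨_, hshrink, ?_⟩
  rcases lt_or_gt_of_ne (σ.injective.ne hic.ne') with hci | hci
  · exact ⟨_, mem_PTSet_of_mem_GenSet (mul_swap_mem_GenSet hσ hblock) hblock hadj (by simpa),
      _, mem_PTSet_of_mem_GenSet (mul_swap_mem_GenSet hend hblock) hblock hadj
        (by simpa [endPerm_eq_mul, hc] using hci.trans hlt), hwidth,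
      .inr (isSquareOf_left_of_below σ hic hcj hci hlt)⟩
  · have hjc : σ j < σ c := (lt_or_gt_of_ne (σ.injective.ne hcj.ne')).resolve_right
      fun hcj' ↦ hempty ⟨c, hic, hcj, hci, hcj'⟩
    exact ⟨_, mem_PTSet_of_mem_GenSet hend hblock hadj (by simpa [endPerm_eq_mul, hc]),
      _, mem_PTSet_of_mem_GenSet hσ hblock hadj hci, hwidth,
      .inl (isSquareOf_left_of_above σ hic hcj hlt hjc)⟩

theorem exists_isSquareOf_right {σ : Perm (Fin (m + n))} {i c j : Fin (m + n)} {hij : i ≠ j}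
    (hr : ⟨σ, i, j, hij⟩ ∈ PESet m n) (hic : i < c) (hcj : c < j) (hadj : (j : ℕ) = c + 1)
    (hblock : (c : ℕ) < m ↔ (j : ℕ) < m) :
    ∃ r' ∈ PESet m n, ∃ t ∈ PTSet m n, ∃ u ∈ PTSet m n, (r'.j : ℕ) - r'.i < j - i ∧
      (IsSquareOf ⟨σ, i, j, hij⟩ t u r' ∨ IsSquareOf t ⟨σ, i, j, hij⟩ r' u) := by
  have hshrink := mem_PESet_shrink_right hr hic hcj hblock
  have hwidth : (c : ℕ) - i < j - i := by
    rw [Fin.lt_def] at hic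
    omega
  obtain ⟨⟨hσ, hend⟩, ⟨-, hlt⟩, hempty⟩ := hr
  have hc : swap i j c = c := swap_apply_of_ne_of_ne hic.ne' hcj.ne
  refine ⟨_, hshrink, ?_⟩
  rcases lt_or_gt_of_ne (σ.injective.ne hcj.ne') with hjc | hjc
  · exact ⟨_, mem_PTSet_of_mem_GenSet (mul_swap_mem_GenSet hσ hblock) hblock hadj (by simpa),
      _, mem_PTSet_of_mem_GenSet (mul_swap_mem_GenSet hend hblock) hblock hadj
        (by simpa [endPerm_eq_mul, hc] using hlt.trans hjc), hwidth,
      .inr (isSquareOf_right_of_above σ hic hcj hlt hjc)⟩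
  · have hci : σ c < σ i := (lt_or_gt_of_ne (σ.injective.ne hic.ne')).resolve_right
      fun hic' ↦ hempty ⟨c, hic, hcj, hic', hjc⟩
    exact ⟨_, mem_PTSet_of_mem_GenSet hend hblock hadj (by simpa [endPerm_eq_mul, hc]),
      _, mem_PTSet_of_mem_GenSet hσ hblock hadj hjc, hwidth,
      .inl (isSquareOf_right_of_below σ hic hcj hci hlt)⟩

theorem planarEmpty_induction {P : GridRect (m + n) → Prop} (thin : ∀ r ∈ PTSet m n, P r)
    (fst : ∀ r₁ ∈ PESet m n, ∀ r₂ ∈ PESet m n, ∀ r₃ ∈ PESet m n, ∀ r₄ ∈ PESet m n,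
      IsSquareOf r₁ r₂ r₃ r₄ → P r₂ → P r₃ → P r₄ → P r₁)
    (snd : ∀ r₁ ∈ PESet m n, ∀ r₂ ∈ PESet m n, ∀ r₃ ∈ PESet m n, ∀ r₄ ∈ PESet m n,
      IsSquareOf r₁ r₂ r₃ r₄ → P r₁ → P r₃ → P r₄ → P r₂) :
    ∀ r ∈ PESet m n, P r := by
  intro r
  induction hk : (r.j : ℕ) - r.i using Nat.strong_induction_on generalizing r with
  | _ k ih =>
    subst hk
    intro hr
    by_cases hthin : r.Thin
    · exact thin r ⟨hr.1, hr.2.1, hthin⟩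
    obtain ⟨c, hic, hcj, hc⟩ := exists_adjacent_of_not_thin hr.2.1.1 hthin
    obtain ⟨r', hr', t, ht, u, hu, hlt, h⟩ := hc.elim
      (fun h ↦ exists_isSquareOf_left hr hic hcj h.1 h.2)
      (fun h ↦ exists_isSquareOf_right hr hic hcj h.1 h.2)
    have hP := ih _ hlt r' rfl hr'
    have ht' := mem_PESet_of_mem_PTSet ht
    have hu' := mem_PESet_of_mem_PTSet hu
    rcases h with h | h
    · exact fst r hr t ht' u hu' r' hr' h (thin t ht) (thin u hu) hP
    · exact snd t ht' r hr r' hr' u hu' h (thin t ht) hP (thin u hu)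

end Generators

section Adjacent

open GridRect

variable {N : ℕ}

theorem swap_colFin_apply_of_ne {c : ℕ} (hc : c + 1 < N) {p : Fin N} (h : (p : ℕ) ≠ c)
    (h' : (p : ℕ) ≠ c + 1) : swap (colFin c hc) (colFin' c hc) p = p :=
  swap_apply_of_ne_of_ne (fun hp ↦ h (congrArg Fin.val hp)) fun hp ↦ h' (congrArg Fin.val hp)

theorem tmul_eq_mul (σ : Perm (Fin N)) (c : ℕ) (hc : c + 1 < N) :
    tmul σ c hc = σ * swap (colFin c hc) (colFin' c hc) := rfl

theorem tmul_tmul (σ : Perm (Fin N)) (c : ℕ) (hc : c + 1 < N) : tmul (tmul σ c hc) c hc = σ :=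
  mul_swap_mul_self _ _ σ

theorem tmul_apply_colFin (σ : Perm (Fin N)) (c : ℕ) (hc : c + 1 < N) :
    tmul σ c hc (colFin c hc) = σ (colFin' c hc) := by
  rw [tmul_eq_mul, Perm.mul_apply, swap_apply_left]

theorem tmul_apply_colFin' (σ : Perm (Fin N)) (c : ℕ) (hc : c + 1 < N) :
    tmul σ c hc (colFin' c hc) = σ (colFin c hc) := by
  rw [tmul_eq_mul, Perm.mul_apply, swap_apply_right]

theorem tmul_apply_of_ne (σ : Perm (Fin N)) {c : ℕ} (hc : c + 1 < N) {p : Fin N}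
    (h : (p : ℕ) ≠ c) (h' : (p : ℕ) ≠ c + 1) : tmul σ c hc p = σ p := by
  rw [tmul_eq_mul, Perm.mul_apply, swap_colFin_apply_of_ne hc h h']

/-- `c` is a descent of `σ`: multiplying by `τ_c` goes down in the weak order. -/
def IsDescent (σ : Perm (Fin N)) (c : ℕ) (hc : c + 1 < N) : Prop :=
  σ (colFin' c hc) < σ (colFin c hc)

theorem IsDescent.edgeRect_eq {σ : Perm (Fin N)} {c : ℕ} {hc : c + 1 < N}
    (h : IsDescent σ c hc) :
    edgeRect σ c hc = ⟨tmul σ c hc, colFin c hc, colFin' c hc, colNe c hc⟩ :=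
  if_neg h.not_gt

theorem IsDescent.planar_edgeRect {σ : Perm (Fin N)} {c : ℕ} {hc : c + 1 < N}
    (h : IsDescent σ c hc) : (edgeRect σ c hc).Planar := by
  rw [h.edgeRect_eq]
  exact ⟨Fin.lt_def.2 c.lt_succ_self, by rwa [tmul_apply_colFin, tmul_apply_colFin']⟩

theorem IsDescent.endPerm_edgeRect {σ : Perm (Fin N)} {c : ℕ} {hc : c + 1 < N}
    (h : IsDescent σ c hc) : (edgeRect σ c hc).endPerm = σ := by
  rw [h.edgeRect_eq]
  exact tmul_tmul σ c hc

theorem IsDescent.toLex_tmul_lt {σ : Perm (Fin N)} {c : ℕ} {hc : c + 1 < N}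
    (h : IsDescent σ c hc) : toLex ⇑(tmul σ c hc) < toLex ⇑σ := by
  have := h.planar_edgeRect.toLex_perm_lt
  rwa [h.endPerm_edgeRect, h.edgeRect_eq] at this

theorem edgeRect_tmul (σ : Perm (Fin N)) (c : ℕ) (hc : c + 1 < N) :
    edgeRect (tmul σ c hc) c hc = edgeRect σ c hc := by
  rw [edgeRect, edgeRect, tmul_apply_colFin, tmul_apply_colFin', tmul_tmul]
  rcases lt_or_gt_of_ne (σ.injective.ne (colNe c hc)) with h | h
  · rw [if_neg h.not_gt, if_pos h]
  · rw [if_pos h, if_neg h.not_gt]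

theorem tmul_tmul_comm (σ : Perm (Fin N)) {c d : ℕ} (hc : c + 1 < N) (hd : d + 1 < N)
    (hcd : c + 2 ≤ d ∨ d + 2 ≤ c) :
    tmul (tmul σ c hc) d hd = tmul (tmul σ d hd) c hc := by
  simp only [tmul_eq_mul, mul_assoc]
  rw [mul_swap_eq_swap_mul, swap_colFin_apply_of_ne, swap_colFin_apply_of_ne] <;>
    dsimp [colFin, colFin'] <;> omega

theorem tmul_braid (σ : Perm (Fin N)) {c : ℕ} (hc : c + 1 < N) (hd : c + 1 + 1 < N) :
    tmul (tmul (tmul σ c hc) (c + 1) hd) c hc =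
      tmul (tmul (tmul σ (c + 1) hd) c hc) (c + 1) hd := by
  have hne : colFin c hc ≠ colFin' (c + 1) hd := by simp [colFin, colFin', Fin.ext_iff, add_assoc]
  simp only [tmul_eq_mul, mul_assoc σ]
  exact congrArg (σ * ·) (swap_braid (colNe c hc) (colNe (c + 1) hd) hne)

variable {m n : ℕ}

theorem IsDescent.tmul_mem_GenSet {σ : Perm (Fin (m + n))} {c : ℕ} {hc : c + 1 < m + n}
    (h : IsDescent σ c hc) (hσ : σ ∈ GenSet m n) : tmul σ c hc ∈ GenSet m n := by
  by_cases hblock : (colFin c hc : ℕ) < m ↔ (colFin' c hc : ℕ) < m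
  · exact mul_swap_mem_GenSet hσ hblock
  intro p
  have hp := hσ p
  have hc' := hσ (colFin c hc)
  have hd' := hσ (colFin' c hc)
  rw [IsDescent, Fin.lt_def] at h
  by_cases hpc : p = colFin c hc
  · subst hpc
    rw [tmul_apply_colFin]
    dsimp [colFin, colFin'] at *
    omega
  by_cases hpd : p = colFin' c hc
  · subst hpd
    rw [tmul_apply_colFin']
    dsimp [colFin, colFin'] at *
    omega
  · rwa [tmul_eq_mul, Perm.mul_apply, swap_apply_of_ne_of_ne hpc hpd]

theorem IsDescent.edgeRect_mem_PTSet {σ : Perm (Fin (m + n))} {c : ℕ} {hc : c + 1 < m + n}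
    (h : IsDescent σ c hc) (hσ : σ ∈ GenSet m n) : edgeRect σ c hc ∈ PTSet m n := by
  refine ⟨⟨?_, by rwa [h.endPerm_edgeRect]⟩, h.planar_edgeRect, ?_⟩
  · rw [h.edgeRect_eq]
    exact h.tmul_mem_GenSet hσ
  · rw [h.edgeRect_eq]
    rfl

theorem exists_isDescent_of_mem_PTSet {r : GridRect (m + n)} (hr : r ∈ PTSet m n) :
    ∃ c, ∃ hc : c + 1 < m + n, IsDescent r.endPerm c hc ∧ edgeRect r.endPerm c hc = r := by
  obtain ⟨x, i, j, hij⟩ := r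
  obtain ⟨-, ⟨-, hlt⟩, hthin⟩ := hr
  have hc : (i : ℕ) + 1 < m + n := hthin ▸ j.2
  obtain rfl : j = colFin' i hc := Fin.ext hthin
  have h : IsDescent (tmul x i hc) i hc := by
    rwa [IsDescent, tmul_apply_colFin, tmul_apply_colFin']
  exact ⟨i, hc, h, h.edgeRect_eq.trans (by simp only [tmul_tmul]; rfl)⟩

end Adjacent

section Lift

theorem exists_recursion_of_locallyConfluent {X C A B : Type*} [Preorder B] [WellFoundedLT B]
    (μ : X → B) {D : X → C → Prop} {t : X → C → X} (ht : ∀ x c, D x c → μ (t x c) < μ x)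
    (φ : X → C → A → A) (a : A)
    (hφ : ∀ (s : X → A) (x : X) (c d : C),
      (∀ y b, μ y < μ x → D y b → s y = φ y b (s (t y b))) → D x c → D x d →
        φ x c (s (t x c)) = φ x d (s (t x d))) :
    ∃ s : X → A, (∀ x c, D x c → s x = φ x c (s (t x c))) ∧ ∀ x, (∀ c, ¬D x c) → s x = a := by
  classical
  have hwf : WellFounded fun x y ↦ μ x < μ y := InvImage.wf μ wellFounded_lt
  let F (x : X) (ih : ∀ y, μ y < μ x → A) : A :=
    if h : ∃ c, D x c then φ x h.choose (ih _ (ht x _ h.choose_spec)) else a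
  have hs (x : X) : hwf.fix F x = F x fun y _ ↦ hwf.fix F y := hwf.fix_eq F x
  refine ⟨hwf.fix F, fun x ↦ ?_, fun x hx ↦ ?_⟩
  · induction x using hwf.induction with
    | _ x ih =>
      intro c hc
      have h : ∃ c, D x c := ⟨c, hc⟩
      rw [hs x]
      exact (dif_pos h).trans (hφ _ x _ c (fun y b hy ↦ ih y hy b) h.choose_spec hc)
  · rw [hs x]
    exact dif_neg (not_exists.2 hx)

open GridRect

variable {N : ℕ} {A : Type*} [Ring A] {e : Fin N → A}

/-- The value at `σ` of a lift of the generators to `A`, computed from its value `a` at `σ·τ_c`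
when the edge `e(σ, c)` is to have the prescribed sign. -/
def liftStep (e : Fin N → A) (S : GridRect N → ℤ) (σ : Perm (Fin N)) (c : ℕ) (hc : c + 1 < N)
    (a : A) : A :=
  S (edgeRect σ c hc) • (a * (e (colFin c hc) - e (colFin' c hc)))

theorem liftStep_comm (he : IsCliffordFamily e) {S : GridRect N → ℤ} {σ : Perm (Fin N)} {c d : ℕ}
    (hc : c + 1 < N) (hd : d + 1 < N) (hcd : c + 2 ≤ d ∨ d + 2 ≤ c)
    (hS : S (edgeRect σ c hc) * S (edgeRect (tmul σ c hc) d hd) *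
      S (edgeRect σ d hd) * S (edgeRect (tmul σ d hd) c hc) = -1) (a : A) :
    liftStep e S σ c hc (liftStep e S (tmul σ c hc) d hd a) =
      liftStep e S σ d hd (liftStep e S (tmul σ d hd) c hc a) := by
  have hsign : S (edgeRect σ c hc) * S (edgeRect (tmul σ c hc) d hd) =
      -(S (edgeRect σ d hd) * S (edgeRect (tmul σ d hd) c hc)) :=
    Int.eq_of_mul_eq_one (by linear_combination -hS)
  have hroot := he.sub_mul_sub (colNe c hc) (colFin d hd) (colFin' d hd)
  rw [swap_colFin_apply_of_ne, swap_colFin_apply_of_ne] at hroot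
  · simp only [liftStep, smul_mul_assoc, smul_smul, mul_assoc, hsign, hroot, mul_neg, neg_smul,
      smul_neg]
  all_goals dsimp [colFin, colFin']; omega

theorem liftStep_braid (he : IsCliffordFamily e) {S : GridRect N → ℤ} {σ : Perm (Fin N)} {c : ℕ}
    (hc : c + 1 < N) (hd : c + 1 + 1 < N)
    (hS : S (edgeRect σ c hc) * S (edgeRect (tmul σ c hc) (c + 1) hd) *
      S (edgeRect (tmul (tmul σ c hc) (c + 1) hd) c hc) *
      S (edgeRect (tmul (tmul (tmul σ c hc) (c + 1) hd) c hc) (c + 1) hd) *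
      S (edgeRect (tmul (tmul σ (c + 1) hd) c hc) c hc) *
      S (edgeRect (tmul σ (c + 1) hd) (c + 1) hd) = 1) (a : A) :
    liftStep e S σ c hc (liftStep e S (tmul σ c hc) (c + 1) hd
        (liftStep e S (tmul (tmul σ c hc) (c + 1) hd) c hc a)) =
      liftStep e S σ (c + 1) hd (liftStep e S (tmul σ (c + 1) hd) c hc
        (liftStep e S (tmul (tmul σ (c + 1) hd) c hc) (c + 1) hd a)) := by
  rw [tmul_braid, edgeRect_tmul, edgeRect_tmul, edgeRect_tmul] at hS
  have hsign : S (edgeRect σ c hc) * (S (edgeRect (tmul σ c hc) (c + 1) hd) *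
        S (edgeRect (tmul (tmul σ c hc) (c + 1) hd) c hc)) =
      S (edgeRect σ (c + 1) hd) * (S (edgeRect (tmul σ (c + 1) hd) c hc) *
        S (edgeRect (tmul (tmul σ (c + 1) hd) c hc) (c + 1) hd)) :=
    Int.eq_of_mul_eq_one (by linear_combination hS)
  have hne : colFin c hc ≠ colFin' (c + 1) hd := by simp [colFin, colFin', Fin.ext_iff, add_assoc]
  have hroot : _ * (e (colFin (c + 1) hd) - e (colFin' (c + 1) hd)) * _ = _ :=
    he.sub_braid (colNe c hc) (colNe (c + 1) hd) hne
  rw [mul_assoc, mul_assoc] at hroot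
  simp only [liftStep, smul_mul_assoc, smul_smul, mul_assoc, hsign]
  exact congrArg (fun v ↦ _ • (a * v)) hroot

end Lift

section LocalConfluence

variable {m n : ℕ} {A : Type*} [Ring A] {e : Fin (m + n) → A} {S : GridRect (m + n) → ℤ}
  {s : Perm (Fin (m + n)) → A} {σ : Perm (Fin (m + n))}

theorem liftStep_eq_of_far (he : IsCliffordFamily e) (hsq : SqCond m n S) (hσ : σ ∈ GenSet m n)
    (hs : ∀ ρ ∈ GenSet m n, toLex ⇑ρ < toLex ⇑σ → ∀ b hb, IsDescent ρ b hb →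
      s ρ = liftStep e S ρ b hb (s (tmul ρ b hb)))
    {c d : ℕ} {hc : c + 1 < m + n} {hd : d + 1 < m + n} (hσc : IsDescent σ c hc)
    (hσd : IsDescent σ d hd) (hcd : c + 2 ≤ d ∨ d + 2 ≤ c) :
    liftStep e S σ c hc (s (tmul σ c hc)) = liftStep e S σ d hd (s (tmul σ d hd)) := by
  have hcd' : IsDescent (tmul σ c hc) d hd := by
    rwa [IsDescent, tmul_apply_of_ne, tmul_apply_of_ne] <;> dsimp [colFin, colFin'] <;> omega
  have hdc' : IsDescent (tmul σ d hd) c hc := by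
    rwa [IsDescent, tmul_apply_of_ne, tmul_apply_of_ne] <;> dsimp [colFin, colFin'] <;> omega
  have hc' := hσc.tmul_mem_GenSet hσ
  have hd' := hσd.tmul_mem_GenSet hσ
  rw [hs _ hc' hσc.toLex_tmul_lt d hd hcd', hs _ hd' hσd.toLex_tmul_lt c hc hdc',
    ← tmul_tmul_comm σ hc hd hcd]
  exact liftStep_comm he hc hd hcd
    (hsq σ c d hc hd hcd hσ hc' hd' (hcd'.tmul_mem_GenSet hc')) _

theorem liftStep_eq_of_near (he : IsCliffordFamily e) (hhex : HexCond m n S)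
    (hσ : σ ∈ GenSet m n)
    (hs : ∀ ρ ∈ GenSet m n, toLex ⇑ρ < toLex ⇑σ → ∀ b hb, IsDescent ρ b hb →
      s ρ = liftStep e S ρ b hb (s (tmul ρ b hb)))
    {c : ℕ} {hc : c + 1 < m + n} {hd : c + 1 + 1 < m + n} (hσc : IsDescent σ c hc)
    (hσd : IsDescent σ (c + 1) hd) :
    liftStep e S σ c hc (s (tmul σ c hc)) =
      liftStep e S σ (c + 1) hd (s (tmul σ (c + 1) hd)) := by
  have hmid : colFin' c hc = colFin (c + 1) hd := rfl
  have hl : (colFin c hc : ℕ) = c := rfl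
  have hr : (colFin' (c + 1) hd : ℕ) = c + 1 + 1 := rfl
  have hcd : IsDescent (tmul σ c hc) (c + 1) hd := by
    rw [IsDescent, ← hmid, tmul_apply_colFin', tmul_apply_of_ne σ hc (by omega) (by omega)]
    exact lt_trans hσd hσc
  have hcdc : IsDescent (tmul (tmul σ c hc) (c + 1) hd) c hc := by
    rwa [IsDescent, hmid, tmul_apply_colFin, tmul_apply_of_ne _ hd (by omega) (by omega),
      tmul_apply_colFin, tmul_apply_of_ne σ hc (by omega) (by omega)]
  have hdc : IsDescent (tmul σ (c + 1) hd) c hc := by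
    rw [IsDescent, hmid, tmul_apply_colFin, tmul_apply_of_ne σ hd (by omega) (by omega)]
    exact lt_trans hσd hσc
  have hdcd : IsDescent (tmul (tmul σ (c + 1) hd) c hc) (c + 1) hd := by
    rwa [IsDescent, ← hmid, tmul_apply_colFin', tmul_apply_of_ne _ hc (by omega) (by omega),
      tmul_apply_colFin', tmul_apply_of_ne σ hd (by omega) (by omega)]
  have hc₁ := hσc.tmul_mem_GenSet hσ
  have hc₂ := hcd.tmul_mem_GenSet hc₁
  have hd₁ := hσd.tmul_mem_GenSet hσ
  have hd₂ := hdc.tmul_mem_GenSet hd₁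
  rw [hs _ hc₁ hσc.toLex_tmul_lt _ hd hcd,
    hs _ hc₂ (hcd.toLex_tmul_lt.trans hσc.toLex_tmul_lt) _ hc hcdc,
    hs _ hd₁ hσd.toLex_tmul_lt _ hc hdc,
    hs _ hd₂ (hdc.toLex_tmul_lt.trans hσd.toLex_tmul_lt) _ hd hdcd, ← tmul_braid σ hc hd]
  exact liftStep_braid he hc hd
    (hhex σ c hc hd hσ hc₁ hc₂ (hcdc.tmul_mem_GenSet hc₂) hd₂ hd₁) _

theorem liftStep_eq_liftStep (he : IsCliffordFamily e) (hsq : SqCond m n S)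
    (hhex : HexCond m n S) (hσ : σ ∈ GenSet m n)
    (hs : ∀ ρ ∈ GenSet m n, toLex ⇑ρ < toLex ⇑σ → ∀ b hb, IsDescent ρ b hb →
      s ρ = liftStep e S ρ b hb (s (tmul ρ b hb)))
    {c d : ℕ} {hc : c + 1 < m + n} {hd : d + 1 < m + n} (hσc : IsDescent σ c hc)
    (hσd : IsDescent σ d hd) :
    liftStep e S σ c hc (s (tmul σ c hc)) = liftStep e S σ d hd (s (tmul σ d hd)) := by
  wlog hcd : c ≤ d
  · exact (this he hsq hhex hσ hs hσd hσc (le_of_not_ge hcd)).symm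
  obtain rfl | rfl | hcd : c = d ∨ d = c + 1 ∨ c + 2 ≤ d := by omega
  · rfl
  · exact liftStep_eq_of_near he hhex hσ hs hσc hσd
  · exact liftStep_eq_of_far he hsq hσ hs hσc hσd (.inl hcd)

theorem exists_lift (he : IsCliffordFamily e) (h2 : IsUnit (2 : A))
    (hS : ∀ r ∈ PTSet m n, IsUnit (S r)) (hsq : SqCond m n S) (hhex : HexCond m n S) :
    ∃ s : Perm (Fin (m + n)) → A, (∀ σ ∈ GenSet m n, IsUnit (s σ)) ∧
      ∀ σ ∈ GenSet m n, ∀ c hc, IsDescent σ c hc →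
        s σ = liftStep e S σ c hc (s (tmul σ c hc)) := by
  obtain ⟨s, hs, hs_one⟩ := exists_recursion_of_locallyConfluent
    (X := Perm (Fin (m + n))) (C := {c : ℕ // c + 1 < m + n})
    (fun σ ↦ toLex ⇑σ) (D := fun σ c ↦ σ ∈ GenSet m n ∧ IsDescent σ c.1 c.2)
    (t := fun σ c ↦ tmul σ c.1 c.2) (fun σ c h ↦ h.2.toLex_tmul_lt)
    (fun σ c ↦ liftStep e S σ c.1 c.2) (1 : A)
    fun s σ c d hs hc hd ↦ liftStep_eq_liftStep he hsq hhex hc.1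
      (fun ρ hρ hlt b hb h ↦ hs ρ ⟨b, hb⟩ hlt ⟨hρ, h⟩) hc.2 hd.2
  refine ⟨s, fun σ ↦ ?_, fun σ hσ c hc h ↦ hs σ ⟨c, hc⟩ ⟨hσ, h⟩⟩
  induction hμ : toLex ⇑σ using WellFoundedLT.induction generalizing σ with
  | _ μ ih =>
    subst hμ
    intro hσ
    by_cases h : ∃ c : {c : ℕ // c + 1 < m + n}, IsDescent σ c.1 c.2
    · obtain ⟨c, h⟩ := h
      rw [hs σ c ⟨hσ, h⟩, liftStep, zsmul_eq_mul]
      exact ((hS _ (h.edgeRect_mem_PTSet hσ)).map (Int.castRingHom A)).mul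
        ((ih _ h.toLex_tmul_lt _ rfl (h.tmul_mem_GenSet hσ)).mul (he.isUnit_sub h2 (colNe _ _)))
    · rw [hs_one σ fun c hc ↦ h ⟨c, hc.2⟩]
      exact isUnit_one

end LocalConfluence

section Sign

open GridRect

/-- `ε` is the sign of the rectangle `r` with respect to a lift `s` of the generators: following the
flow along `r` changes the lift by the root of `r`, up to the sign `ε`. -/
def IsLiftSign {N : ℕ} {A : Type*} [Ring A] (e : Fin N → A) (s : Perm (Fin N) → A) (r : GridRect N)
    (ε : ℤ) : Prop :=
  s r.perm * r.root e = ε • s r.endPerm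

namespace IsLiftSign

variable {N : ℕ} {A : Type*} [Ring A] {e : Fin N → A} {s : Perm (Fin N) → A}
  {r₁ r₂ r₃ r₄ : GridRect N} {ε₁ ε₂ ε₃ ε₄ : ℤ}

theorem unique [CharZero A] {r : GridRect N} {ε ε' : ℤ} (hr : IsUnit (s r.endPerm))
    (h : IsLiftSign e s r ε) (h' : IsLiftSign e s r ε') : ε = ε' := by
  rw [IsLiftSign, zsmul_eq_mul] at h h'
  exact Int.cast_injective (hr.mul_right_cancel (h.symm.trans h'))

theorem mul_root_mul_root (h : IsSquareOf r₁ r₂ r₃ r₄)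
    (hroot : r₁.root e * r₂.root e = -(r₃.root e * r₄.root e)) (h₃ : IsLiftSign e s r₃ ε₃)
    (h₄ : IsLiftSign e s r₄ ε₄) :
    s r₁.perm * r₁.root e * r₂.root e = -(ε₃ * ε₄) • s r₂.endPerm := by
  obtain ⟨-, h31, -, h43, h42, -, -⟩ := h
  rw [mul_assoc, hroot, mul_neg, ← mul_assoc, ← h31, h₃, smul_mul_assoc, ← h43, h₄, h42, smul_smul,
    neg_smul]

theorem fst (h : IsSquareOf r₁ r₂ r₃ r₄)
    (hroot : r₁.root e * r₂.root e = -(r₃.root e * r₄.root e)) (hr₂ : IsUnit (r₂.root e))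
    (hε₂ : IsUnit ε₂) (h₂ : IsLiftSign e s r₂ ε₂) (h₃ : IsLiftSign e s r₃ ε₃)
    (h₄ : IsLiftSign e s r₄ ε₄) : IsLiftSign e s r₁ (-(ε₃ * ε₄) * ε₂) := by
  refine hr₂.mul_right_cancel ?_
  rw [mul_root_mul_root h hroot h₃ h₄, ← h.2.2.1, smul_mul_assoc, h₂, smul_smul, mul_assoc,
    Int.isUnit_mul_self hε₂, mul_one]

theorem snd (h : IsSquareOf r₁ r₂ r₃ r₄)
    (hroot : r₁.root e * r₂.root e = -(r₃.root e * r₄.root e)) (hε₁ : IsUnit ε₁)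
    (h₁ : IsLiftSign e s r₁ ε₁) (h₃ : IsLiftSign e s r₃ ε₃) (h₄ : IsLiftSign e s r₄ ε₄) :
    IsLiftSign e s r₂ (ε₁ * -(ε₃ * ε₄)) := by
  rw [IsLiftSign, mul_smul, ← mul_root_mul_root h hroot h₃ h₄, h₁, smul_mul_assoc, smul_smul,
    Int.isUnit_mul_self hε₁, one_smul, h.2.2.1]

theorem mul_eq_neg_mul [CharZero A] (h : IsSquareOf r₁ r₂ r₃ r₄)
    (hroot : r₁.root e * r₂.root e = -(r₃.root e * r₄.root e)) (hr₂ : IsUnit (s r₂.endPerm))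
    (h₁ : IsLiftSign e s r₁ ε₁) (h₂ : IsLiftSign e s r₂ ε₂) (h₃ : IsLiftSign e s r₃ ε₃)
    (h₄ : IsLiftSign e s r₄ ε₄) : ε₁ * ε₂ = -(ε₃ * ε₄) := by
  have hprod := mul_root_mul_root h hroot h₃ h₄
  rw [h₁, smul_mul_assoc, ← h.2.2.1, h₂, smul_smul, zsmul_eq_mul, zsmul_eq_mul] at hprod
  exact Int.cast_injective (hr₂.mul_right_cancel hprod)

end IsLiftSign

variable {m n : ℕ}

theorem isLiftSign_of_mem_PTSet {A : Type*} [Ring A] {e : Fin (m + n) → A}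
    {s : Perm (Fin (m + n)) → A} {S : GridRect (m + n) → ℤ} (hS : ∀ r ∈ PTSet m n, IsUnit (S r))
    (hs : ∀ σ ∈ GenSet m n, ∀ c hc, IsDescent σ c hc → s σ = liftStep e S σ c hc (s (tmul σ c hc)))
    (r : GridRect (m + n)) (hr : r ∈ PTSet m n) : IsLiftSign e s r (S r) := by
  obtain ⟨c, hc, h, hedge⟩ := exists_isDescent_of_mem_PTSet hr
  rw [IsLiftSign, hs _ hr.1.2 c hc h, liftStep, hedge, smul_smul, Int.isUnit_mul_self (hS r hr),
    one_smul, ← hedge, h.endPerm_edgeRect, h.edgeRect_eq, root]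

theorem exists_isLiftSign {A : Type*} [Ring A] {e : Fin (m + n) → A} {s : Perm (Fin (m + n)) → A}
    (he : IsCliffordFamily e) (h2 : IsUnit (2 : A))
    (hthin : ∀ r ∈ PTSet m n, ∃ ε, IsUnit ε ∧ IsLiftSign e s r ε) :
    ∀ r ∈ PESet m n, ∃ ε, IsUnit ε ∧ IsLiftSign e s r ε := by
  refine planarEmpty_induction hthin ?_ ?_
  · rintro r₁ hr₁ r₂ hr₂ r₃ hr₃ r₄ hr₄ h ⟨ε₂, hε₂, h₂⟩ ⟨ε₃, hε₃, h₃⟩ ⟨ε₄, hε₄, h₄⟩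
    have hroot := h.root_mul_root he hr₁.2.1 hr₂.2.1 hr₃.2.1 hr₄.2.1 hr₁.2.2 hr₃.2.2
    exact ⟨_, (hε₃.mul hε₄).neg.mul hε₂, .fst h hroot (he.isUnit_sub h2 r₂.hij) hε₂ h₂ h₃ h₄⟩
  · rintro r₁ hr₁ r₂ hr₂ r₃ hr₃ r₄ hr₄ h ⟨ε₁, hε₁, h₁⟩ ⟨ε₃, hε₃, h₃⟩ ⟨ε₄, hε₄, h₄⟩
    have hroot := h.root_mul_root he hr₁.2.1 hr₂.2.1 hr₃.2.1 hr₄.2.1 hr₁.2.2 hr₃.2.2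
    exact ⟨_, hε₁.mul (hε₃.mul hε₄).neg, .snd h hroot hε₁ h₁ h₃ h₄⟩

theorem sqPropOn_of_isLiftSign {A : Type*} [Ring A] [CharZero A] {e : Fin (m + n) → A}
    {s : Perm (Fin (m + n)) → A} (he : IsCliffordFamily e) (hs : ∀ σ ∈ GenSet m n, IsUnit (s σ))
    {S : GridRect (m + n) → ℤ} (hS : ∀ r ∈ PESet m n, IsUnit (S r) ∧ IsLiftSign e s r (S r)) :
    SqPropOn (PESet m n) S := by
  intro r₁ r₂ r₃ r₄ h hr₁ hr₂ hr₃ hr₄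
  have hroot := h.root_mul_root he hr₁.2.1 hr₂.2.1 hr₃.2.1 hr₄.2.1 hr₁.2.2 hr₃.2.2
  obtain ⟨hε₃, h₃⟩ := hS r₃ hr₃
  obtain ⟨hε₄, h₄⟩ := hS r₄ hr₄
  rw [mul_assoc, IsLiftSign.mul_eq_neg_mul h hroot (hs _ hr₂.1.2) (hS r₁ hr₁).2 (hS r₂ hr₂).2 h₃ h₄,
    neg_mul, Int.isUnit_mul_self (hε₃.mul hε₄)]

theorem SqPropOn.eqOn_PESet {S S' : GridRect (m + n) → ℤ} (hS : SqPropOn (PESet m n) S)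
    (hS' : SqPropOn (PESet m n) S') (heq : Set.EqOn S S' (PTSet m n)) :
    Set.EqOn S S' (PESet m n) := by
  refine planarEmpty_induction heq ?_ ?_
  all_goals
    intro r₁ hr₁ r₂ hr₂ r₃ hr₃ r₄ hr₄ h ha h₃ h₄
    have hprod := hS r₁ r₂ r₃ r₄ h hr₁ hr₂ hr₃ hr₄
    have hprod' := hS' r₁ r₂ r₃ r₄ h hr₁ hr₂ hr₃ hr₄
    rw [← ha, ← h₃, ← h₄] at hprod'
  · have hne : S r₂ * S r₃ * S r₄ ≠ 0 := fun hzero ↦ by grind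
    exact mul_right_cancel₀ hne (by linear_combination hprod - hprod')
  · have hne : S r₁ * S r₃ * S r₄ ≠ 0 := fun hzero ↦ by grind
    exact mul_right_cancel₀ hne (by linear_combination hprod - hprod')

end Sign

/-- Given a `{1,−1}`-valued map `S₀` on the planar thin rectangles in `F'` satisfying (Sq)
and (Hex), there is exactly one `{1,−1}`-valued map on the planar empty rectangles in `F'`
extending `S₀` and satisfying (S-3) with respect to squares all four of whose rectangles
are planar, empty, and in `F'`. -/
theorem unique_extension_to_planar_empty (m n : ℕ) (hm : 1 ≤ m) (hn : 1 ≤ n)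
    (S₀ : GridRect (m + n) → ℤ)
    (h₀val : ∀ r ∈ PTSet m n, S₀ r = 1 ∨ S₀ r = -1)
    (h₀sq : SqCond m n S₀) (h₀hex : HexCond m n S₀) :
    ∃ S : GridRect (m + n) → ℤ,
      ((∀ r ∈ PESet m n, S r = 1 ∨ S r = -1) ∧ (∀ r ∈ PTSet m n, S r = S₀ r) ∧
        SqPropOn (PESet m n) S) ∧
      ∀ S' : GridRect (m + n) → ℤ,
        ((∀ r ∈ PESet m n, S' r = 1 ∨ S' r = -1) ∧ (∀ r ∈ PTSet m n, S' r = S₀ r) ∧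
          SqPropOn (PESet m n) S') →
        ∀ r ∈ PESet m n, S' r = S r := by
  let _ : Invertible (2 : ℚ) := invertibleOfNonzero two_ne_zero
  let A := CliffordAlgebra (QuadraticMap.weightedSumSquares ℚ fun _ : Fin (m + n) ↦ (1 : ℚ))
  have : CharZero A := algebraRat.charZero A
  have h2 : IsUnit (2 : A) :=
    map_ofNat (algebraMap ℚ A) 2 ▸ (IsUnit.mk0 (2 : ℚ) two_ne_zero).map (algebraMap ℚ A)
  have he := isCliffordFamily_ι_single ℚ (Fin (m + n))
  have h₀unit : ∀ r ∈ PTSet m n, IsUnit (S₀ r) := fun r hr ↦ Int.isUnit_iff.2 (h₀val r hr)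
  obtain ⟨s, hs, hlift⟩ := exists_lift he h2 h₀unit h₀sq h₀hex
  have hthin := isLiftSign_of_mem_PTSet h₀unit hlift
  choose! S hS using exists_isLiftSign he h2 fun r hr ↦ ⟨S₀ r, h₀unit r hr, hthin r hr⟩
  have hext : Set.EqOn S S₀ (PTSet m n) := fun r hr ↦
    (hS r (mem_PESet_of_mem_PTSet hr)).2.unique (hs _ hr.1.2) (hthin r hr)
  have hsq : SqPropOn (PESet m n) S := sqPropOn_of_isLiftSign he hs hS
  exact ⟨S, ⟨fun r hr ↦ Int.isUnit_iff.1 (hS r hr).1, hext, hsq⟩,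
    fun S' ⟨_, hext', hsq'⟩ ↦ hsq'.eqOn_PESet hsq fun r hr ↦ (hext' r hr).trans (hext hr).symm⟩
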